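/- Transfer of the (1 − 1/e) approximation guarantee: let OPT = max{h(P) : P ⊆ {1,…,m}, |P| ≤ k}, and let P̂ be a subset of {1,…,m} with |P̂| = k such that f(P̂) ≥ (1 − 1/e) · max{f(P) : P ⊆ {1,…,m}, |P| ≤ k} (as is guaranteed for the classical greedy solution of the submodular problem). Then h(P̂) ≥ (1 − 1/e) · OPT. -/

import Mathlib

open Finset

noncomputable section

/-- Frobenius inner product `⟨S, γ⟩ = Σ_{i,j} S_{ij} γ_{ij}`. -/
def dotS {m n : ℕ} (S γ : Fin m → Fin n → ℝ) : ℝ := ∑ i, ∑ j, S i j * γ i j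

/-- Transport polytope with equality marginals. -/
def Gamma {m n : ℕ} (μ : Fin m → ℝ) (ν : Fin n → ℝ) : Set (Fin m → Fin n → ℝ) :=
  {γ | (∀ i j, 0 ≤ γ i j) ∧ (∀ i, ∑ j, γ i j = μ i) ∧ (∀ j, ∑ i, γ i j = ν j)}

/-- Semi-relaxed transport polytope: target marginal constraint is `≤`. -/
def GammaLe {m n : ℕ} (μ : Fin m → ℝ) (ν : Fin n → ℝ) : Set (Fin m → Fin n → ℝ) :=
  {γ | (∀ i j, 0 ≤ γ i j) ∧ (∀ i, ∑ j, γ i j = μ i) ∧ (∀ j, ∑ i, γ i j ≤ ν j)}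

/-- Indicator vector of a subset `P ⊆ {1,…,m}`. -/
def indVec {m : ℕ} (P : Finset (Fin m)) : Fin m → ℝ := fun i => if i ∈ P then 1 else 0

/-- `h(P) = max_{γ ∈ Γ(1_P, (|P|/n)𝟙)} ⟨S, γ⟩`. -/
def hval {m n : ℕ} (S : Fin m → Fin n → ℝ) (P : Finset (Fin m)) : ℝ :=
  sSup (dotS S '' Gamma (indVec P) (fun _ => (P.card : ℝ) / (n : ℝ)))

/-- `f(P) = max_{γ ∈ Γ_≤(1_P, (k/n)𝟙)} ⟨S, γ⟩`. -/
def fval {m n : ℕ} (k : ℕ) (S : Fin m → Fin n → ℝ) (P : Finset (Fin m)) : ℝ :=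
  sSup (dotS S '' GammaLe (indVec P) (fun _ => (k : ℝ) / (n : ℝ)))

/-!
Write `f` for `fval k S` and `h` for `hval S`. Relaxing the target marginal from `|P|/n` to at most
`k/n` enlarges the feasible set when `|P| ≤ k`, so `h ≤ f` there and the optimum of `h` is at most
that of `f`. When `|P| = k`, both marginals have total mass `k`, so no column can be slack and
`h P = f P`. Hence any multiplicative guarantee for `f` at a set of size `k` passes to `h`.
-/

lemma csSup_setOf_exists_eq_mono {α β : Type*} [ConditionallyCompleteLattice β] {p : α → Prop}
    {f g : α → β} (hp : ∃ a, p a) (hg : BddAbove {x | ∃ a, p a ∧ x = g a})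
    (hfg : ∀ a, p a → f a ≤ g a) :
    sSup {x | ∃ a, p a ∧ x = f a} ≤ sSup {x | ∃ a, p a ∧ x = g a} := by
  refine csSup_le (hp.imp' f fun a ha => ⟨a, ha, rfl⟩) ?_
  rintro _ ⟨a, ha, rfl⟩
  exact (hfg a ha).trans (le_csSup hg ⟨a, ha, rfl⟩)

section TransportPolytope

variable {m n : ℕ} {μ : Fin m → ℝ} {ν ν' : Fin n → ℝ}

lemma gamma_subset_gammaLe (h : ν ≤ ν') : Gamma μ ν ⊆ GammaLe μ ν' :=
  fun _ ⟨hγ, hrow, hcol⟩ => ⟨hγ, hrow, fun j => (hcol j).trans_le (h j)⟩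

lemma gammaLe_eq_gamma_of_sum_eq (h : ∑ i, μ i = ∑ j, ν j) : GammaLe μ ν = Gamma μ ν := by
  refine Set.Subset.antisymm ?_ (gamma_subset_gammaLe le_rfl)
  rintro γ ⟨hγ, hrow, hcol⟩
  have total_mass : ∑ j, ∑ i, γ i j = ∑ j, ν j := by
    rw [sum_comm, ← h]
    exact sum_congr rfl fun i _ => hrow i
  have columns_tight := (sum_eq_sum_iff_of_le fun j _ => hcol j).1 total_mass
  exact ⟨hγ, hrow, fun j => columns_tight j (mem_univ j)⟩

lemma gamma_nonempty (hμ : 0 ≤ μ) (hν : 0 ≤ ν) (h : ∑ i, μ i = ∑ j, ν j) :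
    (Gamma μ ν).Nonempty := by
  -- The normalised product coupling; when the total mass is `0`, division by zero makes it `0`.
  refine ⟨fun i j => μ i * ν j / ∑ j, ν j, fun i j => ?_, fun i => ?_, fun j => ?_⟩
  · exact div_nonneg (mul_nonneg (hμ i) (hν j)) (sum_nonneg fun j _ => hν j)
  · rw [← sum_div, ← mul_sum]
    refine mul_div_cancel_of_imp fun hzero => ?_
    exact (sum_eq_zero_iff_of_nonneg fun i _ => hμ i).1 (h.trans hzero) i (mem_univ i)
  · rw [← sum_div, ← sum_mul, h, mul_comm]
    refine mul_div_cancel_of_imp fun hzero => ?_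
    exact (sum_eq_zero_iff_of_nonneg fun j _ => hν j).1 hzero j (mem_univ j)

lemma le_of_mem_gammaLe {γ : Fin m → Fin n → ℝ} (hγ : γ ∈ GammaLe μ ν) (i : Fin m) (j : Fin n) :
    γ i j ≤ μ i :=
  (single_le_sum (fun j _ => hγ.1 i j) (mem_univ j)).trans_eq (hγ.2.1 i)

lemma bddAbove_dotS_image_gammaLe (S : Fin m → Fin n → ℝ) (μ : Fin m → ℝ) (ν : Fin n → ℝ) :
    BddAbove (dotS S '' GammaLe μ ν) := by
  refine ⟨∑ i, ∑ j, |S i j| * μ i, ?_⟩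
  rintro _ ⟨γ, hγ, rfl⟩
  refine sum_le_sum fun i _ => sum_le_sum fun j _ => ?_
  calc
    S i j * γ i j ≤ |S i j| * γ i j := mul_le_mul_of_nonneg_right (le_abs_self _) (hγ.1 i j)
    _ ≤ |S i j| * μ i := mul_le_mul_of_nonneg_left (le_of_mem_gammaLe hγ i j) (abs_nonneg _)

end TransportPolytope

section PrototypeSelection

variable {m n : ℕ}

lemma indVec_nonneg (P : Finset (Fin m)) : 0 ≤ indVec P := by
  intro i
  simp only [indVec, Pi.zero_apply]
  split_ifs <;> norm_num

lemma sum_indVec_eq_sum_card_div (hn : 0 < n) (P : Finset (Fin m)) :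
    ∑ i, indVec P i = ∑ _j : Fin n, (P.card : ℝ) / n := by
  have hn' : (n : ℝ) ≠ 0 := Nat.cast_ne_zero.2 hn.ne'
  simp [indVec, mul_div_cancel₀ _ hn']

lemma hval_le_fval {k : ℕ} (hn : 0 < n) (S : Fin m → Fin n → ℝ) {P : Finset (Fin m)}
    (hP : P.card ≤ k) : hval S P ≤ fval k S P := by
  have feasible : (Gamma (indVec P) fun _ : Fin n => (P.card : ℝ) / n).Nonempty :=
    gamma_nonempty (indVec_nonneg P) (fun _ => by positivity) (sum_indVec_eq_sum_card_div hn P)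
  refine csSup_le_csSup (bddAbove_dotS_image_gammaLe S _ _) (feasible.image _) ?_
  exact Set.image_mono (gamma_subset_gammaLe fun _ => by gcongr)

lemma fval_card_eq_hval (hn : 0 < n) (S : Fin m → Fin n → ℝ) (P : Finset (Fin m)) :
    fval P.card S P = hval S P := by
  rw [fval, hval, gammaLe_eq_gamma_of_sum_eq (sum_indVec_eq_sum_card_div hn P)]

end PrototypeSelection

theorem stmt_13_general {m n k : ℕ} (hn : 0 < n) (S : Fin m → Fin n → ℝ) {c : ℝ} (hc : 0 ≤ c)
    (Phat : Finset (Fin m)) (hcard : Phat.card = k)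
    (hgreedy : c * sSup {x : ℝ | ∃ P : Finset (Fin m), P.card ≤ k ∧ x = fval k S P} ≤
      fval k S Phat) :
    c * sSup {x : ℝ | ∃ P : Finset (Fin m), P.card ≤ k ∧ x = hval S P} ≤ hval S Phat := by
  have hbdd : BddAbove {x : ℝ | ∃ P : Finset (Fin m), P.card ≤ k ∧ x = fval k S P} :=
    ((Set.finite_range (fval k S)).subset <| by
      rintro _ ⟨P, -, rfl⟩
      exact Set.mem_range_self P).bddAbove
  calc
    c * sSup {x : ℝ | ∃ P : Finset (Fin m), P.card ≤ k ∧ x = hval S P}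
        ≤ c * sSup {x : ℝ | ∃ P : Finset (Fin m), P.card ≤ k ∧ x = fval k S P} :=
      mul_le_mul_of_nonneg_left
        (csSup_setOf_exists_eq_mono ⟨Phat, hcard.le⟩ hbdd fun _ hP => hval_le_fval hn S hP) hc
    _ ≤ fval k S Phat := hgreedy
    _ = hval S Phat := by rw [← hcard, fval_card_eq_hval hn]

/-- transfer of the `(1 − 1/e)` approximation guarantee from `f` to `h`. -/
theorem stmt_13 (m n k : ℕ) (hm : 0 < m) (hn : 0 < n) (hk : 0 < k)
    (hkm : k ≤ m) (hkn : k ≤ n)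
    (S : Fin m → Fin n → ℝ) (hS : ∀ i j, 0 ≤ S i j)
    (Phat : Finset (Fin m)) (hcard : Phat.card = k)
    (hgreedy : (1 - 1 / Real.exp 1) *
        sSup {x : ℝ | ∃ P : Finset (Fin m), P.card ≤ k ∧ x = fval k S P} ≤
      fval k S Phat) :
    (1 - 1 / Real.exp 1) *
        sSup {x : ℝ | ∃ P : Finset (Fin m), P.card ≤ k ∧ x = hval S P} ≤
      hval S Phat := by
  have hc : (0 : ℝ) ≤ 1 - 1 / Real.exp 1 :=
    sub_nonneg.2 (div_le_one_of_le₀ (Real.one_le_exp zero_le_one) (Real.exp_nonneg 1))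
  exact stmt_13_general hn S hc Phat hcard hgreedy
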